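/- For every τ in the complex upper half-plane: α(−1/(3τ)) = β(τ) and β(−1/(3τ)) = α(τ); consequently α(−1/(3τ))³·(α(τ)³ − 27) = 27·α(τ)³ and β(−1/(3τ))³·(β(τ)³ − 27) = 27·β(τ)³. -/

import Mathlib

open Complex

/-- The Dedekind eta function `η(τ) = e^{πiτ/12} ∏_{n≥1} (1 - e^{2πinτ})`. -/
noncomputable def dedekindEta (τ : ℂ) : ℂ :=
  Complex.exp (Real.pi * I * τ / 12) *
    ∏' n : ℕ, (1 - Complex.exp (2 * Real.pi * I * (n + 1) * τ))

/-- `α(τ) = 3 + 27 η(9τ)³/η(τ)³`. -/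
noncomputable def alpha (τ : ℂ) : ℂ :=
  3 + 27 * dedekindEta (9 * τ) ^ 3 / dedekindEta τ ^ 3

/-- `β(τ) = 3 + η(τ/3)³/η(3τ)³`. -/
noncomputable def beta (τ : ℂ) : ℂ :=
  3 + dedekindEta (τ / 3) ^ 3 / dedekindEta (3 * τ) ^ 3

open Filter Topology

/-- The finite product `(1 - q) ⋯ (1 - q ^ n)`. -/
noncomputable def qPoch (q : ℂ) (n : ℕ) : ℂ := ∏ i ∈ Finset.range n, (1 - q ^ (i + 1))

/-- The infinite product `∏ (1 - q ^ n)` over `n ≥ 1`. -/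
noncomputable def eulerProd (q : ℂ) : ℂ := ∏' n : ℕ, (1 - q ^ (n + 1))

/-- The reciprocal of `qPoch`, extended by zero to negative indices. -/
noncomputable def qPochInv (q : ℂ) (m : ℤ) : ℂ := if m < 0 then 0 else (qPoch q m.toNat)⁻¹

/-- The summand `(-1) ^ k * q ^ (k (k + 1) / 2)`. -/
noncomputable def signedTri (q : ℂ) (k : ℤ) : ℂ := (-1) ^ k * q ^ (k * (k + 1) / 2)

lemma one_sub_pow_ne_zero {q : ℂ} (hq : ‖q‖ < 1) (n : ℕ) : 1 - q ^ (n + 1) ≠ 0 := by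
  rw [sub_ne_zero]
  intro h
  have h1 : ‖q ^ (n + 1)‖ < 1 := by
    rw [norm_pow]
    exact pow_lt_one₀ (norm_nonneg _) hq (by simp)
  rw [← h] at h1
  simp at h1

lemma qPoch_ne_zero {q : ℂ} (hq : ‖q‖ < 1) (n : ℕ) : qPoch q n ≠ 0 :=
  Finset.prod_ne_zero_iff.mpr fun i _ ↦ one_sub_pow_ne_zero hq i

lemma eulerProd_ne_zero {q : ℂ} (hq : ‖q‖ < 1) : eulerProd q ≠ 0 := by
  unfold eulerProd
  simp_rw [sub_eq_add_neg]
  refine tprod_one_add_ne_zero_of_summable (fun i ↦ ?_) ?_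
  · simpa [sub_eq_add_neg] using one_sub_pow_ne_zero hq i
  · simpa using (summable_nat_add_iff 1).mpr (summable_geometric_of_lt_one (norm_nonneg _) hq)

lemma tendsto_qPoch {q : ℂ} (hq : ‖q‖ < 1) :
    Tendsto (qPoch q) atTop (𝓝 (eulerProd q)) :=
  (ModularForm.multipliable_one_sub_pow hq).hasProd.tendsto_prod_nat

lemma qPochInv_natCast (q : ℂ) (n : ℕ) : qPochInv q n = (qPoch q n)⁻¹ := by
  simp [qPochInv]

lemma qPochInv_sub_one {q : ℂ} (hq : ‖q‖ < 1) (m : ℤ) :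
    qPochInv q (m - 1) = (1 - q ^ m) * qPochInv q m := by
  rcases lt_trichotomy m 0 with h | h | h
  · simp [qPochInv, h, show m - 1 < 0 by omega]
  · simp [qPochInv, h]
  · obtain ⟨n, rfl⟩ : ∃ n : ℕ, m = n + 1 := ⟨(m - 1).toNat, by omega⟩
    have e : qPochInv q ((n : ℤ) + 1) = (qPoch q (n + 1))⁻¹ := by
      exact_mod_cast qPochInv_natCast q (n + 1)
    rw [add_sub_cancel_right, e, qPochInv_natCast, qPoch, qPoch, Finset.prod_range_succ]
    have h1 := one_sub_pow_ne_zero hq n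
    have h2 := qPoch_ne_zero hq n
    rw [qPoch] at h2
    rw [show ((n : ℤ) + 1) = ((n + 1 : ℕ) : ℤ) by simp, zpow_natCast]
    field_simp

lemma tendsto_qPochInv {q : ℂ} (hq : ‖q‖ < 1) (k : ℤ) :
    Tendsto (fun n : ℕ ↦ qPochInv q (n + k)) atTop (𝓝 (eulerProd q)⁻¹) := by
  have h1 : Tendsto (fun n : ℕ ↦ ((n : ℤ) + k).toNat) atTop atTop := by
    rw [tendsto_atTop]
    intro b
    filter_upwards [eventually_ge_atTop (b + k.natAbs)] with n hn
    omega
  refine (((tendsto_qPoch hq).comp h1).inv₀ (eulerProd_ne_zero hq)).congr' ?_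
  filter_upwards [eventually_ge_atTop k.natAbs] with n hn
  simp [qPochInv, show ¬ ((n : ℤ) + k < 0) by omega]

lemma exists_norm_qPochInv_le {q : ℂ} (hq : ‖q‖ < 1) :
    ∃ C : ℝ, 0 ≤ C ∧ ∀ m, ‖qPochInv q m‖ ≤ C := by
  obtain ⟨C, hC⟩ := (tendsto_qPochInv hq 0).norm.bddAbove_range
  have h (n : ℕ) : ‖qPochInv q n‖ ≤ C := by simpa using hC ⟨n, rfl⟩
  have hC0 : 0 ≤ C := (norm_nonneg _).trans (h 0)
  refine ⟨C, hC0, fun m ↦ ?_⟩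
  rcases lt_or_ge m 0 with hm | hm
  · simpa [qPochInv, hm] using hC0
  · lift m to ℕ using hm
    exact h m

lemma triangle_succ (k : ℤ) : (k + 1) * (k + 1 + 1) / 2 = k * (k + 1) / 2 + (k + 1) := by
  rw [← Int.add_mul_ediv_right _ _ two_ne_zero]
  ring_nf

lemma signedTri_add_one {q : ℂ} (hq : q ≠ 0) (k : ℤ) :
    signedTri q (k + 1) = -(q ^ (k + 1) * signedTri q k) := by
  rw [signedTri, signedTri, triangle_succ, zpow_add₀ hq, zpow_add₀ (by simp)]
  ring

lemma summable_mul_signedTri {q : ℂ} (hq : ‖q‖ < 1) :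
    Summable fun k : ℤ ↦ (2 * k + 1 : ℂ) * signedTri q k := by
  have hn (n : ℕ) : signedTri q n = (-1) ^ n * q ^ (n * (n + 1) / 2) := by
    rw [signedTri, zpow_natCast]
    exact_mod_cast rfl
  have hneg (k : ℤ) : signedTri q (-(k + 1)) = - signedTri q k := by
    rw [signedTri, signedTri, show -(k + 1) * (-(k + 1) + 1) = k * (k + 1) by ring, zpow_neg,
      zpow_add₀ (by simp)]
    rcases Int.even_or_odd k with h | h <;> simp [h.neg_one_zpow]
  have key : Summable fun n : ℕ ↦ (2 * (n : ℤ) + 1 : ℂ) * signedTri q n := by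
    have hq' : ‖‖q‖‖ < 1 := by rwa [norm_norm]
    have hb : Summable fun n : ℕ ↦ (2 * ((n : ℝ) ^ 1 * ‖q‖ ^ n) + (n : ℝ) ^ 0 * ‖q‖ ^ n) :=
      ((summable_pow_mul_geometric_of_norm_lt_one 1 hq').mul_left 2).add
        (summable_pow_mul_geometric_of_norm_lt_one 0 hq')
    refine Summable.of_norm_bounded hb fun n ↦ ?_
    have h1 : ‖(2 * (n : ℤ) + 1 : ℂ)‖ = 2 * n + 1 := by
      have : (2 * (n : ℤ) + 1 : ℂ) = ((2 * n + 1 : ℕ) : ℂ) := by push_cast; ring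
      rw [this, Complex.norm_natCast]
      push_cast
      ring
    have h2 : n ≤ n * (n + 1) / 2 := by
      rw [Nat.le_div_iff_mul_le (by simp)]
      rcases n with - | n
      · simp
      · nlinarith
    have h3 := pow_le_pow_of_le_one (norm_nonneg q) hq.le h2
    rw [hn, norm_mul, h1, norm_mul, norm_pow, norm_pow, norm_neg, norm_one, one_pow, one_mul]
    nlinarith [n.cast_nonneg (α := ℝ)]
  refine Summable.of_nat_of_neg_add_one key (key.congr fun n ↦ ?_)
  rw [hneg]
  push_cast
  ring

/-- The coefficients of the finite form of Jacobi's identity. -/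
noncomputable def finiteCoeff (q : ℂ) (n : ℕ) (k : ℤ) : ℂ :=
  signedTri q k * qPochInv q (n + -k) * qPochInv q (n + (1 + k))

lemma finiteCoeff_succ {q : ℂ} (hq : ‖q‖ < 1) (hq0 : q ≠ 0) (n : ℕ) (k : ℤ) :
    (1 - q ^ (2 * n + 2)) * (1 - q ^ (2 * n + 3)) * finiteCoeff q (n + 1) k =
      (1 + q ^ (2 * n + 2)) * finiteCoeff q n k -
        q ^ (n + 1) * (finiteCoeff q n (k + -1) + finiteCoeff q n (k + 1)) := by
  have t1 := signedTri_add_one hq0 k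
  have t2 := signedTri_add_one hq0 (k + -1)
  rw [neg_add_cancel_right] at t2
  have r1 := qPochInv_sub_one hq (n + 1 - k)
  have r2 := qPochInv_sub_one hq (n - k)
  have r3 := qPochInv_sub_one hq (n + 2 + k)
  have r4 := qPochInv_sub_one hq (n + 1 + k)
  unfold finiteCoeff
  push_cast
  rw [show (n + 1 + -k : ℤ) = n + 1 - k by ring, show (n + 1 + (1 + k) : ℤ) = n + 2 + k by ring,
    show (n + -k : ℤ) = n - k by ring, show (n + (1 + k) : ℤ) = n + 1 + k by ring,
    show (n + -(k + -1) : ℤ) = n + 1 - k by ring, show (n + (1 + (k + -1)) : ℤ) = n + k by ring,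
    show (n + -(k + 1) : ℤ) = n - k - 1 by ring, show (n + (1 + (k + 1)) : ℤ) = n + 2 + k by ring]
  rw [show (n + 1 - k - 1 : ℤ) = n - k by ring] at r1
  rw [show (n + 2 + k - 1 : ℤ) = n + 1 + k by ring] at r3
  rw [show (n + 1 + k - 1 : ℤ) = n + k by ring] at r4
  rw [r2, r4, r1, r3, t1, t2]
  have hu := zpow_ne_zero k hq0
  have e1 : q ^ ((n : ℤ) + 1 - k) = q ^ n * q / q ^ k := by
    rw [zpow_sub₀ hq0, zpow_add₀ hq0]; simp
  have e2 : q ^ ((n : ℤ) - k) = q ^ n / q ^ k := by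
    rw [zpow_sub₀ hq0]; simp
  have e3 : q ^ ((n : ℤ) + 2 + k) = q ^ n * q ^ 2 * q ^ k := by
    rw [zpow_add₀ hq0, zpow_add₀ hq0]; norm_cast
  have e4 : q ^ ((n : ℤ) + 1 + k) = q ^ n * q * q ^ k := by
    rw [zpow_add₀ hq0, zpow_add₀ hq0]; simp
  have e5 : q ^ (k + 1) = q ^ k * q := by rw [zpow_add₀ hq0]; simp
  rw [e1, e2, e3, e4, e5]
  generalize signedTri q (k + -1) = s at *
  generalize qPochInv q (n + 1 - k) = R
  generalize qPochInv q (n + 2 + k) = R'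
  generalize q ^ k = u at *
  field_simp
  ring

lemma summable_mul_finiteCoeff (q : ℂ) (n : ℕ) (c : ℤ → ℂ) :
    Summable fun k ↦ c k * finiteCoeff q n k := by
  refine summable_of_ne_finset_zero (s := Finset.Icc (-(n : ℤ) - 1) n) fun k hk ↦ ?_
  rw [Finset.mem_Icc, not_and_or] at hk
  rcases hk with hk | hk
  · simp [finiteCoeff, qPochInv, show (n + (1 + k) : ℤ) < 0 by omega]
  · simp [finiteCoeff, qPochInv, show (n : ℤ) < k by omega]

lemma tsum_finiteCoeff {q : ℂ} (hq : ‖q‖ < 1) (hq0 : q ≠ 0) (n : ℕ) :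
    qPoch q (2 * n + 1) * ∑' k : ℤ, (2 * k + 1 : ℂ) * finiteCoeff q n k = 2 * qPoch q n ^ 2 := by
  induction n with
  | zero =>
    have hs : ∀ k ∉ ({0, -1} : Finset ℤ), (2 * k + 1 : ℂ) * finiteCoeff q 0 k = 0 := by
      intro k hk
      simp only [Finset.mem_insert, Finset.mem_singleton, not_or] at hk
      rcases lt_or_ge 0 k with h | h
      · simp [finiteCoeff, qPochInv, h]
      · simp [finiteCoeff, qPochInv, show (1 + k : ℤ) < 0 by omega]
    rw [tsum_eq_sum hs]
    have := one_sub_pow_ne_zero hq 0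
    simp only [zero_add, pow_one] at this
    rw [Finset.sum_pair (by norm_num)]
    simp [finiteCoeff, qPochInv, qPoch, signedTri]
    field_simp
    ring
  | succ n ih =>
    have h0 := summable_mul_finiteCoeff q n
    have hm : ∑' k : ℤ, (2 * k + 1 : ℂ) * finiteCoeff q n (k + -1) =
        ∑' k : ℤ, (2 * k + 3 : ℂ) * finiteCoeff q n k := by
      rw [← (Equiv.addRight (1 : ℤ)).tsum_eq]
      refine tsum_congr fun k ↦ ?_
      simp only [Equiv.coe_addRight, add_neg_cancel_right]
      push_cast
      ring
    have hp : ∑' k : ℤ, (2 * k + 1 : ℂ) * finiteCoeff q n (k + 1) =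
        ∑' k : ℤ, (2 * k - 1 : ℂ) * finiteCoeff q n k := by
      rw [← (Equiv.addRight (-1 : ℤ)).tsum_eq]
      refine tsum_congr fun k ↦ ?_
      simp only [Equiv.coe_addRight, neg_add_cancel_right]
      push_cast
      ring
    have sm : Summable fun k : ℤ ↦ (2 * k + 1 : ℂ) * finiteCoeff q n (k + -1) := by
      refine (Equiv.addRight (1 : ℤ)).summable_iff.mp ?_
      simpa [Function.comp_def] using h0 fun k ↦ 2 * ((k + 1 : ℤ) : ℂ) + 1
    have sp : Summable fun k : ℤ ↦ (2 * k + 1 : ℂ) * finiteCoeff q n (k + 1) := by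
      refine (Equiv.addRight (-1 : ℤ)).summable_iff.mp ?_
      simpa [Function.comp_def] using h0 fun k ↦ 2 * ((k + -1 : ℤ) : ℂ) + 1
    have hmp : ∑' k : ℤ, (2 * k + 3 : ℂ) * finiteCoeff q n k +
        ∑' k : ℤ, (2 * k - 1 : ℂ) * finiteCoeff q n k =
        2 * ∑' k : ℤ, (2 * k + 1 : ℂ) * finiteCoeff q n k := by
      rw [← (h0 _).tsum_add (h0 _), ← tsum_mul_left]
      exact tsum_congr fun k ↦ by ring
    have step : (1 - q ^ (2 * n + 2)) * (1 - q ^ (2 * n + 3)) *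
        ∑' k : ℤ, (2 * k + 1 : ℂ) * finiteCoeff q (n + 1) k =
        (1 - q ^ (n + 1)) ^ 2 * ∑' k : ℤ, (2 * k + 1 : ℂ) * finiteCoeff q n k := by
      calc _ = ∑' k : ℤ, ((1 + q ^ (2 * n + 2)) * ((2 * k + 1 : ℂ) * finiteCoeff q n k) -
              q ^ (n + 1) * ((2 * k + 1 : ℂ) * finiteCoeff q n (k + -1) +
                (2 * k + 1 : ℂ) * finiteCoeff q n (k + 1))) := by
            rw [← tsum_mul_left]
            refine tsum_congr fun k ↦ ?_
            linear_combination (2 * k + 1 : ℂ) * finiteCoeff_succ hq hq0 n k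
        _ = _ := by
            rw [((h0 _).mul_left _).tsum_sub ((sm.add sp).mul_left _), tsum_mul_left,
              tsum_mul_left, sm.tsum_add sp, hm, hp, hmp]
            ring
    have e1 : qPoch q (2 * (n + 1) + 1) =
        qPoch q (2 * n + 1) * (1 - q ^ (2 * n + 2)) * (1 - q ^ (2 * n + 3)) := by
      rw [show 2 * (n + 1) + 1 = 2 * n + 1 + 1 + 1 by ring, qPoch, qPoch,
        Finset.prod_range_succ, Finset.prod_range_succ]
    have e2 : qPoch q (n + 1) = qPoch q n * (1 - q ^ (n + 1)) := Finset.prod_range_succ _ _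
    rw [e1, e2]
    linear_combination qPoch q (2 * n + 1) * step + (1 - q ^ (n + 1)) ^ 2 * ih

/-- Jacobi's identity for the cube of the Euler product. -/
lemma hasSum_mul_signedTri {q : ℂ} (hq : ‖q‖ < 1) (hq0 : q ≠ 0) :
    HasSum (fun k : ℤ ↦ (2 * k + 1 : ℂ) * signedTri q k) (2 * eulerProd q ^ 3) := by
  have hs := summable_mul_signedTri hq
  have hE := eulerProd_ne_zero hq
  obtain ⟨C, hC, hbound⟩ := exists_norm_qPochInv_le hq
  have l1 : Tendsto (fun n : ℕ ↦ ∑' k : ℤ, (2 * k + 1 : ℂ) * finiteCoeff q n k) atTop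
      (𝓝 (∑' k : ℤ, (2 * k + 1 : ℂ) * (signedTri q k * (eulerProd q)⁻¹ * (eulerProd q)⁻¹))) := by
    refine tendsto_tsum_of_dominated_convergence (hs.norm.mul_right (C * C)) (fun k ↦ ?_)
      (Eventually.of_forall fun n k ↦ ?_)
    · exact (((tendsto_qPochInv hq _).const_mul _).mul (tendsto_qPochInv hq _)).const_mul _
    · rw [finiteCoeff, mul_assoc, ← mul_assoc, norm_mul, norm_mul (qPochInv _ _)]
      gcongr
      · exact hbound _
      · exact hbound _
  have l2 : Tendsto (fun n : ℕ ↦ ∑' k : ℤ, (2 * k + 1 : ℂ) * finiteCoeff q n k) atTop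
      (𝓝 (2 * eulerProd q ^ 2 / eulerProd q)) := by
    have h2 : Tendsto (fun n : ℕ ↦ 2 * n + 1) atTop atTop :=
      tendsto_atTop_mono (f := id) (fun n ↦ by simp only [id]; omega) tendsto_id
    refine ((((tendsto_qPoch hq).pow 2).const_mul 2).div
      ((tendsto_qPoch hq).comp h2) hE).congr fun n ↦ ?_
    rw [Pi.div_apply, Function.comp_apply, ← tsum_finiteCoeff hq hq0,
      mul_div_cancel_left₀ _ (qPoch_ne_zero hq _)]
  have h := tendsto_nhds_unique l1 l2
  simp_rw [← mul_assoc, tsum_mul_right] at h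
  convert hs.hasSum using 1
  field_simp at h
  exact h.symm

/-- Replacing `q` by `ω * q` with `ω` a cube root of unity changes only the part of the cube of
the Euler product supported on exponents congruent to one modulo three. -/
lemma eulerProd_root_mul_pow_three {q ω : ℂ} (hq : ‖q‖ < 1) (hq0 : q ≠ 0) (hω : ω ^ 3 = 1) :
    eulerProd (ω * q) ^ 3 = eulerProd q ^ 3 - (ω - 1) * (3 * q * eulerProd (q ^ 9) ^ 3) := by
  have hω0 : ω ≠ 0 := by
    rintro rfl
    simp at hω
  have hωn : ‖ω‖ = 1 := Complex.norm_eq_one_of_pow_eq_one hω (by simp)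
  have h1 := hasSum_mul_signedTri hq hq0
  have h2 := hasSum_mul_signedTri (q := ω * q) (by simpa [hωn]) (by simp [hω0, hq0])
  have h9 := hasSum_mul_signedTri (q := q ^ 9)
    (by rw [norm_pow]; exact pow_lt_one₀ (norm_nonneg _) hq (by simp)) (by simp [hq0])
  have tri (m : ℤ) : (3 * m + 1) * (3 * m + 1 + 1) / 2 = 9 * (m * (m + 1) / 2) + 1 := by
    obtain ⟨c, hc⟩ := Int.even_mul_succ_self m
    rw [hc, show (3 * m + 1) * (3 * m + 1 + 1) = 9 * (m * (m + 1)) + 2 by ring, hc]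
    omega
  have hωz (m : ℤ) : ω ^ (3 * m) = 1 := by
    rw [zpow_mul]
    norm_cast
    simp [hω]
  have hodd (m : ℤ) : (-1 : ℂ) ^ (3 * m + 1) = -(-1) ^ m := by
    rw [zpow_add₀ (by simp), zpow_mul]
    norm_num [zpow_ofNat]
  have hd : HasSum (fun k : ℤ ↦ (2 * k + 1 : ℂ) * (signedTri (ω * q) k - signedTri q k))
      ((1 - ω) * (3 * q) * (2 * eulerProd (q ^ 9) ^ 3)) := by
    have hinj : Function.Injective fun m : ℤ ↦ 3 * m + 1 := fun a b h ↦ by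
      dsimp only at h
      omega
    refine (hinj.hasSum_iff fun k hk ↦ ?_).mp ?_
    · have hk' : k % 3 = 0 ∨ k % 3 = 2 := by
        by_contra hcon
        exact hk ⟨k / 3, by dsimp only; omega⟩
      obtain ⟨j, hj⟩ : ∃ j, k * (k + 1) / 2 = 3 * j := by
        have h3 : 3 ∣ k * (k + 1) := by
          rcases hk' with h | h
          · exact Dvd.dvd.mul_right (by omega) _
          · exact Dvd.dvd.mul_left (by omega) _
        obtain ⟨c, hc⟩ := Int.even_mul_succ_self k
        rw [hc] at h3 ⊢
        exact ⟨c / 3, by omega⟩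
      rw [signedTri, signedTri, hj, mul_zpow, hωz]
      ring
    · refine (congrArg (HasSum · _) (funext fun m ↦ ?_)).mpr (h9.mul_left ((1 - ω) * (3 * q)))
      simp only [Function.comp_apply, signedTri]
      rw [tri, hodd, mul_zpow, zpow_add₀ hω0, zpow_add₀ hq0,
        show 9 * (m * (m + 1) / 2) = 3 * (3 * (m * (m + 1) / 2)) by ring, hωz,
        ← mul_assoc 3 3, zpow_mul]
      push_cast
      norm_num [zpow_ofNat]
      ring
  have hd' := h2.sub h1
  simp_rw [← mul_sub] at hd'
  linear_combination (hd'.unique hd) / 2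

/-- The product of the Euler products at `q`, `ω * q` and `ω ^ 2 * q`. -/
lemma eulerProd_mul_eulerProd_root {q ω : ℂ} (hq : ‖q‖ < 1) (hω : IsPrimitiveRoot ω 3) :
    eulerProd q * eulerProd (ω * q) * eulerProd (ω ^ 2 * q) * eulerProd (q ^ 9) =
      eulerProd (q ^ 3) ^ 4 := by
  have hω3 : ω ^ 3 = 1 := hω.pow_eq_one
  have hωn : ‖ω‖ = 1 := Complex.norm_eq_one_of_pow_eq_one hω3 (by simp)
  have hs : 1 + ω + ω ^ 2 = 0 := by
    simpa [Finset.sum_range_succ] using hω.geom_sum_eq_zero (by norm_num)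
  have hp {r : ℂ} (hr : ‖r‖ < 1) : HasProd (fun n : ℕ ↦ 1 - r ^ (n + 1)) (eulerProd r) :=
    (ModularForm.multipliable_one_sub_pow hr).hasProd
  have hpow {j : ℕ} (hj : j ≠ 0) : ‖q ^ j‖ < 1 := by
    rw [norm_pow]
    exact pow_lt_one₀ (norm_nonneg _) hq hj
  have hinj : Function.Injective fun m : ℕ ↦ 3 * m + 2 := fun a b h ↦ by
    dsimp only at h
    omega
  have hrange (n : ℕ) (hn : n ∉ Set.range fun m : ℕ ↦ 3 * m + 2) : ¬ 3 ∣ n + 1 := fun ⟨c, hc⟩ ↦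
    hn ⟨c - 1, by dsimp only; omega⟩
  have hdvd (m : ℕ) : 3 ∣ 3 * m + 2 + 1 := ⟨m + 1, by ring⟩
  have p9 : HasProd (fun n : ℕ ↦ if 3 ∣ n + 1 then 1 - q ^ (3 * (n + 1)) else 1)
      (eulerProd (q ^ 9)) := by
    refine (hinj.hasProd_iff fun n hn ↦ if_neg (hrange n hn)).mp ?_
    convert hp (hpow (j := 9) (by simp)) using 2 with m
    simp only [Function.comp_apply, hdvd, if_true]
    ring
  have p3 : HasProd (fun n : ℕ ↦ if 3 ∣ n + 1 then (1 - q ^ (n + 1)) ^ 3 else 1)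
      (eulerProd (q ^ 3) ^ 3) := by
    refine (hinj.hasProd_iff fun n hn ↦ if_neg (hrange n hn)).mp ?_
    convert (hp (hpow (j := 3) (by simp))).pow 3 using 2 with m
    simp only [Function.comp_apply, hdvd, if_true]
    ring
  have lhs := (((hp hq).mul (hp (r := ω * q) (by simpa [hωn]))).mul
    (hp (r := ω ^ 2 * q) (by simpa [hωn]))).mul p9
  have rhs := (hp (hpow (j := 3) (by simp))).mul p3
  rw [show eulerProd (q ^ 3) ^ 4 = eulerProd (q ^ 3) * eulerProd (q ^ 3) ^ 3 by ring]
  refine lhs.unique ?_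
  convert rhs using 2 with n
  rw [mul_pow, mul_pow, ← pow_mul, ← pow_mul, mul_comm 2 (n + 1), pow_mul ω (n + 1) 2]
  by_cases h : 3 ∣ n + 1
  · have hw : ω ^ (n + 1) = 1 := (hω.pow_eq_one_iff_dvd _).mpr h
    rw [if_pos h, if_pos h, hw]
    ring
  · have hw : 1 + ω ^ (n + 1) + (ω ^ (n + 1)) ^ 2 = 0 := by
      have := (hω.pow_of_coprime _ ((Nat.Prime.coprime_iff_not_dvd Nat.prime_three).mpr h).symm
        ).geom_sum_eq_zero (by norm_num)
      simpa [Finset.sum_range_succ] using this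
    have hw3 : (ω ^ (n + 1)) ^ 3 = 1 := by rw [pow_right_comm, hω3, one_pow]
    rw [if_neg h, if_neg h, pow_mul' q 3 (n + 1)]
    generalize ω ^ (n + 1) = w at *
    generalize q ^ (n + 1) = x
    linear_combination (-x + w * x ^ 2) * hw - x ^ 3 * hw3

/-- The cubic identity between the Euler products at `q`, `q ^ 3` and `q ^ 9`. -/
lemma eulerProd_cubic {q : ℂ} (hq : ‖q‖ < 1) (hq0 : q ≠ 0) :
    (eulerProd q ^ 3 + 3 * q * eulerProd (q ^ 9) ^ 3) ^ 3 * eulerProd (q ^ 9) ^ 3 =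
      eulerProd (q ^ 3) ^ 12 + 27 * q ^ 3 * eulerProd (q ^ 9) ^ 12 := by
  obtain ⟨ω, hω⟩ : ∃ ω : ℂ, IsPrimitiveRoot ω 3 :=
    ⟨_, Complex.isPrimitiveRoot_exp 3 (by simp)⟩
  have hs : 1 + ω + ω ^ 2 = 0 := by
    simpa [Finset.sum_range_succ] using hω.geom_sum_eq_zero (by norm_num)
  have hω3 : ω ^ 3 = 1 := hω.pow_eq_one
  have h1 := eulerProd_root_mul_pow_three hq hq0 hω3
  have h2 := eulerProd_root_mul_pow_three hq hq0 (ω := ω ^ 2) (by rw [pow_right_comm, hω3, one_pow])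
  have h := congrArg (· ^ 3) (eulerProd_mul_eulerProd_root hq hω)
  simp only [mul_pow _ _ 3] at h
  rw [h1, h2, ← pow_mul] at h
  set b := 3 * q * eulerProd (q ^ 9) ^ 3 with hb
  set e := eulerProd q ^ 3
  have hprod : e * (e - (ω - 1) * b) * (e - (ω ^ 2 - 1) * b) = (e + b) ^ 3 - b ^ 3 := by
    linear_combination (-e ^ 2 * b + e * b ^ 2 * (ω - 2)) * hs
  rw [hprod] at h
  linear_combination h + eulerProd (q ^ 9) ^ 3 * (hb ▸ rfl :
    b ^ 3 = (3 * q * eulerProd (q ^ 9) ^ 3) ^ 3)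

lemma dedekindEta_eq_eta (τ : ℂ) : dedekindEta τ = ModularForm.eta τ := by
  simp only [dedekindEta, ModularForm.eta, ModularForm.eta_q_eq_cexp, Function.Periodic.qParam]
  congr 2
  push_cast
  ring

lemma dedekindEta_eq_eulerProd (τ : ℂ) :
    dedekindEta τ =
      exp (Real.pi * I * τ / 12) * eulerProd (exp (2 * Real.pi * I * τ)) := by
  simp only [dedekindEta, eulerProd]
  congr 2
  ext n
  rw [← Complex.exp_nat_mul]
  push_cast
  ring_nf

lemma dedekindEta_ne_zero {τ : ℂ} (hτ : 0 < τ.im) : dedekindEta τ ≠ 0 :=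
  dedekindEta_eq_eta τ ▸ ModularForm.eta_ne_zero hτ

lemma dedekindEta_neg_inv {τ : ℂ} (hτ : 0 < τ.im) :
    dedekindEta (-1 / τ) = (Complex.sqrt I)⁻¹ * (Complex.sqrt τ * dedekindEta τ) := by
  rw [dedekindEta_eq_eta, dedekindEta_eq_eta]
  exact ModularForm.eta_comp_eq_csqrt_I_inv hτ

lemma beta_pow_three {τ : ℂ} (hτ : 0 < τ.im) :
    beta τ ^ 3 = 27 + (dedekindEta τ / dedekindEta (3 * τ)) ^ 12 := by
  have h3 : 0 < (3 * τ).im := by simpa using hτ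
  set p := exp (Real.pi * I * τ / 36) with hp
  have hp0 : p ≠ 0 := exp_ne_zero _
  have hnorm : ‖p ^ 24‖ < 1 := by
    rw [hp, ← Complex.exp_nat_mul, Complex.norm_exp, Real.exp_lt_one_iff]
    have : (((24 : ℕ) : ℂ) * (Real.pi * I * τ / 36)).re = -(2 / 3 * Real.pi * τ.im) := by
      rw [show ((24 : ℕ) : ℂ) * (Real.pi * I * τ / 36) = ((2 / 3 * Real.pi : ℝ) : ℂ) * (I * τ) by
        push_cast; ring, re_ofReal_mul]
      simp
    rw [this, neg_lt_zero]
    have := Real.pi_pos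
    positivity
  have e1 : dedekindEta (τ / 3) = p * eulerProd (p ^ 24) := by
    rw [dedekindEta_eq_eulerProd, hp, ← Complex.exp_nat_mul]
    push_cast
    ring_nf
  have e3 : dedekindEta τ = p ^ 3 * eulerProd ((p ^ 24) ^ 3) := by
    rw [dedekindEta_eq_eulerProd, hp, ← pow_mul, ← Complex.exp_nat_mul, ← Complex.exp_nat_mul]
    push_cast
    ring_nf
  have e9 : dedekindEta (3 * τ) = p ^ 9 * eulerProd ((p ^ 24) ^ 9) := by
    rw [dedekindEta_eq_eulerProd, hp, ← pow_mul, ← Complex.exp_nat_mul, ← Complex.exp_nat_mul]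
    push_cast
    ring_nf
  have hE : eulerProd ((p ^ 24) ^ 9) ≠ 0 := right_ne_zero_of_mul (e9 ▸ dedekindEta_ne_zero h3)
  have key := eulerProd_cubic hnorm (by positivity)
  rw [beta, e1, e3, e9]
  generalize eulerProd ((p ^ 24) ^ 9) = E₉ at *
  generalize eulerProd ((p ^ 24) ^ 3) = E₃ at *
  generalize eulerProd (p ^ 24) = E₁ at *
  field_simp
  linear_combination key

lemma sqrt_nine_mul {z : ℂ} (hz : z ≠ 0) : Complex.sqrt (9 * z) = 3 * Complex.sqrt z := by
  have h : log (9 * z) = ((2 * Real.log 3 : ℝ) : ℂ) + log z := by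
    have := log_ofReal_mul (r := 9) (by norm_num) hz
    rw [show (9 : ℝ) = 3 ^ 2 by norm_num, Real.log_pow] at this
    push_cast at this ⊢
    norm_num at this ⊢
    exact this
  rw [sqrt_eq_exp (by simpa), sqrt_eq_exp hz, h, add_div, Complex.exp_add]
  congr 1
  rw [ofReal_mul, ofReal_ofNat, mul_div_cancel_left₀ _ two_ne_zero, ← ofReal_exp,
    Real.exp_log (by norm_num), ofReal_ofNat]

lemma alpha_neg_inv {τ : ℂ} (hτ : 0 < τ.im) : alpha (-1 / (3 * τ)) = beta τ := by
  have h3 : 0 < (3 * τ).im := by simpa using hτ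
  have hd : 0 < (τ / 3).im := by simpa using hτ
  have hτ0 : τ ≠ 0 := by
    rintro rfl
    simp at hτ
  have hI : Complex.sqrt I ≠ 0 := by simp [Complex.sqrt]
  have hs : Complex.sqrt (3 * τ) = 3 * Complex.sqrt (τ / 3) := by
    rw [← sqrt_nine_mul (div_ne_zero hτ0 three_ne_zero)]
    congr 1
    ring
  have hs0 : Complex.sqrt (τ / 3) ≠ 0 := by simp [Complex.sqrt, hτ0]
  have hη := dedekindEta_ne_zero h3
  rw [alpha, beta, show 9 * (-1 / (3 * τ)) = -1 / (τ / 3) by field_simp; norm_num,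
    dedekindEta_neg_inv h3, dedekindEta_neg_inv hd, hs]
  field_simp
  ring

lemma neg_one_div_three_mul_im_pos {τ : ℂ} (hτ : 0 < τ.im) : 0 < (-1 / (3 * τ)).im := by
  have h3 : 0 < (3 * τ).im := by simpa using hτ
  rw [neg_div, one_div, neg_im, inv_im, neg_div, neg_neg]
  exact div_pos h3 (normSq_pos.mpr fun h ↦ by simp [h] at h3)

lemma beta_neg_inv {τ : ℂ} (hτ : 0 < τ.im) : beta (-1 / (3 * τ)) = alpha τ := by
  have hτ0 : τ ≠ 0 := by
    rintro rfl
    simp at hτ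
  rw [← alpha_neg_inv (neg_one_div_three_mul_im_pos hτ)]
  congr 1
  field_simp

lemma alpha_pow_three {τ : ℂ} (hτ : 0 < τ.im) :
    alpha τ ^ 3 = 27 + 729 * (dedekindEta (3 * τ) / dedekindEta τ) ^ 12 := by
  have h3 : 0 < (3 * τ).im := by simpa using hτ
  have hτ0 : τ ≠ 0 := by
    rintro rfl
    simp at hτ
  have hI : Complex.sqrt I ≠ 0 := by simp [Complex.sqrt]
  have hη := dedekindEta_ne_zero hτ
  have hsq (z : ℂ) : Complex.sqrt z ^ 12 = z ^ 6 := by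
    rw [show 12 = 2 * 6 from rfl, pow_mul, Complex.sqrt, ← Nat.cast_ofNat (R := ℂ),
      cpow_nat_inv_pow _ two_ne_zero]
  rw [← beta_neg_inv hτ, beta_pow_three (neg_one_div_three_mul_im_pos hτ),
    show 3 * (-1 / (3 * τ)) = -1 / τ by field_simp, dedekindEta_neg_inv h3,
    dedekindEta_neg_inv hτ, mul_div_mul_left _ _ (inv_ne_zero hI)]
  simp only [div_pow, mul_pow, hsq]
  field_simp
  ring

/-- For `τ` in the upper half-plane: `α(−1/(3τ)) = β(τ)`, `β(−1/(3τ)) = α(τ)`, and the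
cubed relations `α(−1/(3τ))³(α(τ)³ − 27) = 27α(τ)³`, `β(−1/(3τ))³(β(τ)³ − 27) = 27β(τ)³`. -/
theorem alpha_beta_inversion (τ : ℂ) (hτ : 0 < τ.im) :
    alpha (-1 / (3 * τ)) = beta τ ∧
    beta (-1 / (3 * τ)) = alpha τ ∧
    alpha (-1 / (3 * τ)) ^ 3 * (alpha τ ^ 3 - 27) = 27 * alpha τ ^ 3 ∧
    beta (-1 / (3 * τ)) ^ 3 * (beta τ ^ 3 - 27) = 27 * beta τ ^ 3 := by
  have h3 : 0 < (3 * τ).im := by simpa using hτ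
  have hη := dedekindEta_ne_zero hτ
  have hη3 := dedekindEta_ne_zero h3
  rw [alpha_neg_inv hτ, beta_neg_inv hτ, alpha_pow_three hτ, beta_pow_three hτ]
  refine ⟨rfl, rfl, ?_, ?_⟩ <;>
  · field_simp
    ring
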